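/- For every integer n ≥ 4 there is no AME(n,6) state of minimal support, while an AME(3,6) state of minimal support exists; that is, N(6) = 3, where N(6) is the largest n for which an AME(n,6) state of minimal support exists. -/

import Mathlib

open scoped BigOperators Classical

noncomputable section

namespace AMEPaper

/-- Combine a configuration on the complement of `B` with a configuration on `B`
into a full configuration on `Fin n`. -/
def combine {n d : ℕ} (B : Finset (Fin n)) (a : {i : Fin n // i ∉ B} → Fin d)
    (b : {i : Fin n // i ∈ B} → Fin d) : Fin n → Fin d :=
  fun i => if h : i ∈ B then b ⟨i, h⟩ else a ⟨i, h⟩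

/-- `ψ` is an absolutely maximally entangled state with `n` sites and local dimension `d`:
it is a unit vector and, for every set `B` of at most `n/2` sites, the reduced density
matrix on `B` equals `d ^ (-|B|)` times the identity. -/
def IsAME (n d : ℕ) (ψ : (Fin n → Fin d) → ℂ) : Prop :=
  (∑ s : Fin n → Fin d, ‖ψ s‖ ^ 2 = 1) ∧
  ∀ B : Finset (Fin n), B.card ≤ n / 2 →
    ∀ b b' : {i : Fin n // i ∈ B} → Fin d,
      (∑ a : {i : Fin n // i ∉ B} → Fin d,
          ψ (combine B a b) * (starRingEnd ℂ) (ψ (combine B a b'))) =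
        if b = b' then ((d : ℂ) ^ B.card)⁻¹ else 0

/-- `ψ` has minimal support: its support in the computational basis has exactly
`d ^ ⌊n/2⌋` elements. -/
def HasMinimalSupport (n d : ℕ) (ψ : (Fin n → Fin d) → ℂ) : Prop :=
  {s : Fin n → Fin d | ψ s ≠ 0}.ncard = d ^ (n / 2)

/-- `C` is an MDS code over the alphabet `Fin d` with wordlength `n` and minimum
Hamming distance `δ`: its minimum distance is exactly `δ` and it meets the Singleton
bound, `|C| = d ^ (n - δ + 1)`. -/
def IsMDSCode (d n δ : ℕ) (C : Finset (Fin n → Fin d)) : Prop :=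
  C.card = d ^ (n - δ + 1) ∧
  (∀ w ∈ C, ∀ w' ∈ C, w ≠ w' → δ ≤ hammingDist w w') ∧
  (∃ w ∈ C, ∃ w' ∈ C, w ≠ w' ∧ hammingDist w w' = δ)

/-- A latin `k`-hypercube of order `d`: fixing all indices but any one of them, the
resulting map `Fin d → Fin d` is a bijection. -/
def IsLatinHypercube (k d : ℕ) (L : (Fin k → Fin d) → Fin d) : Prop :=
  ∀ (i : Fin k) (x : Fin k → Fin d),
    Function.Bijective fun v : Fin d => L (Function.update x i v)

/-- Two latin `k`-hypercubes are orthogonal if for every pair of distinct indices and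
all ways of fixing the remaining indices, the two resulting latin squares are
orthogonal. -/
def AreOrthogonalHypercubes (k d : ℕ) (L M : (Fin k → Fin d) → Fin d) : Prop :=
  ∀ (i j : Fin k), i ≠ j → ∀ x : Fin k → Fin d,
    Function.Injective fun p : Fin d × Fin d =>
      (L (Function.update (Function.update x i p.1) j p.2),
       M (Function.update (Function.update x i p.1) j p.2))

/-- A latin square of order `d`: every row and every column is a bijection. -/
def IsLatinSquare (d : ℕ) (L : Fin d × Fin d → Fin d) : Prop :=
  (∀ i : Fin d, Function.Bijective fun j => L (i, j)) ∧
  (∀ j : Fin d, Function.Bijective fun i => L (i, j))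

/-!
The support of a minimally supported `AME(n,6)` state with `n ≥ 4`, restricted to four sites after
fixing `n / 2 - 2` others, is an orthogonal array with four columns on six symbols, equivalently a
pair of orthogonal latin squares of order `6`. Regard the 36 rows of such an array as the blocks of
a transversal design with four groups of six points.

Modulo `2` the Gram matrix of the incidence matrix factors through the four groups, so the incidence
matrix has rank at most `(36 + 4) / 2 = 20` and its kernel has dimension at least `4`, while the
words in it that are constant on groups form a space of dimension `3`. Any other word of the kernel
is a set of points that every block meets evenly. Counting modulo `8`, and complementing the set in
some of the groups, yields such a set of eight points, and this is a hyperoval: it has two points in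
each group, and every block misses it or is a secant, meeting it twice.

Over `ℚ`, a dimension count produces a nonzero weighting of the points that vanishes on the
hyperoval and sums to zero along every group and every block missing the hyperoval. By a sum of
squares, its values at the other two points of each secant agree, and hence mates (`Mates`) get
opposite weights. Every point outside the hyperoval has the three other such points of its group as
mates, so the zero sum of the group forces its weight to vanish.

For `n = 3` the Greenberger–Horne–Zeilinger state is absolutely maximally entangled.
-/

section OrthogonalArray

open Finset Matrix

variable {β ι α : Type*} {f : β → ι → α}

/-- The rows `f b` form an orthogonal array of strength two and index one: in any two distinct
columns, every pair of symbols occurs in exactly one row. Equivalently, the `f b` are the blocks of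
a transversal design whose points are the pairs `(i, x)` and whose groups are the columns `i`. -/
def IsOrthogonalArray (f : β → ι → α) : Prop :=
  ∀ ⦃i j⦄, i ≠ j → Function.Bijective fun b => (f b i, f b j)

namespace IsOrthogonalArray

theorem row_ext (hf : IsOrthogonalArray f) {i j : ι} (hij : i ≠ j) {b b' : β}
    (hi : f b i = f b' i) (hj : f b j = f b' j) : b = b' :=
  (hf hij).1 (Prod.ext hi hj)

theorem exists_row (hf : IsOrthogonalArray f) {i j : ι} (hij : i ≠ j) (x y : α) :
    ∃ b, f b i = x ∧ f b j = y :=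
  ((hf hij).2 (x, y)).imp fun _ => Prod.ext_iff.1

theorem nonempty_fintype_rows [Finite α] [Nontrivial ι] (hf : IsOrthogonalArray f) :
    Nonempty (Fintype β) := by
  obtain ⟨i, j, hij⟩ := exists_pair_ne ι
  have := Finite.of_injective _ (hf hij).1
  exact nonempty_fintype β

variable [Fintype β] [Fintype α]

theorem card_rows [Nontrivial ι] (hf : IsOrthogonalArray f) :
    Fintype.card β = Fintype.card α ^ 2 := by
  obtain ⟨i, j, hij⟩ := exists_pair_ne ι
  rw [Fintype.card_of_bijective (hf hij), Fintype.card_prod, sq]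

theorem sum_apply₂ {M : Type*} [AddCommMonoid M] (hf : IsOrthogonalArray f) {i j : ι}
    (hij : i ≠ j) (g : α → α → M) : ∑ b, g (f b i) (f b j) = ∑ x, ∑ y, g x y := by
  rw [← Fintype.sum_prod_type']
  exact (hf hij).sum_comp fun p => g p.1 p.2

theorem sum_apply {M : Type*} [AddCommMonoid M] [Nontrivial ι] (hf : IsOrthogonalArray f) (i : ι)
    (g : α → M) : ∑ b, g (f b i) = Fintype.card α • ∑ x, g x := by
  obtain ⟨j, hji⟩ := exists_ne i
  rw [hf.sum_apply₂ hji.symm fun x _ => g x]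
  simp [Finset.sum_nsmul]

variable [Fintype ι] [Nontrivial ι] {R : Type*} [CommRing R]

theorem sum_rowSum (hf : IsOrthogonalArray f) (g : ι → α → R) :
    ∑ b, ∑ i, g i (f b i) = Fintype.card α * ∑ i, ∑ x, g i x := by
  rw [sum_comm, mul_sum]
  exact sum_congr rfl fun i _ => by rw [hf.sum_apply i (g i), nsmul_eq_mul]

theorem sum_rowSum_mul_rowSum (hf : IsOrthogonalArray f) (g h : ι → α → R) :
    ∑ b, (∑ i, g i (f b i)) * ∑ i, h i (f b i) =
      Fintype.card α * (∑ i, ∑ x, g i x * h i x) +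
        ((∑ i, ∑ x, g i x) * (∑ i, ∑ x, h i x) - ∑ i, (∑ x, g i x) * ∑ x, h i x) := by
  have column_pair (i j : ι) : ∑ b, g i (f b i) * h j (f b j) =
      (∑ x, g i x) * (∑ x, h j x) + if i = j then
        Fintype.card α * (∑ x, g i x * h i x) - (∑ x, g i x) * ∑ x, h i x else 0 := by
    split_ifs with hij
    · subst hij
      rw [hf.sum_apply i fun x => g i x * h i x, nsmul_eq_mul]
      ring
    · rw [hf.sum_apply₂ hij fun x y => g i x * h j y, sum_mul_sum, add_zero]
  calc ∑ b, (∑ i, g i (f b i)) * ∑ i, h i (f b i)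
      = ∑ i, ∑ j, ∑ b, g i (f b i) * h j (f b j) := by
        simp only [sum_mul_sum]
        rw [sum_comm]
        exact sum_congr rfl fun i _ => sum_comm
    _ = _ := by
        simp only [column_pair, sum_add_distrib, sum_ite_eq, mem_univ, if_true, sum_sub_distrib]
        rw [← sum_mul_sum, ← mul_sum]
        ring

end IsOrthogonalArray

theorem rank_add_rank_le_of_mul_eq_mul {K l m n o : Type*} [Field K] [Finite l]
    [Fintype m] [Fintype n] [Fintype o] (A : Matrix l m K) (B : Matrix m n K) (C : Matrix l o K)
    (D : Matrix o n K) (h : A * B = C * D) : A.rank + B.rank ≤ Fintype.card m + Fintype.card o := by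
  have hmul : fromCols A (-C) * fromRows B D = 0 := by
    rw [fromCols_mul_fromRows, h, Matrix.neg_mul, add_neg_cancel]
  have hA : A.rank ≤ (fromCols A (-C)).rank := (fromCols A (-C)).rank_submatrix_le id Sum.inl
  have hB : B.rank ≤ (fromRows B D).rank := (fromRows B D).rank_submatrix_le Sum.inl id
  calc A.rank + B.rank ≤ (fromCols A (-C)).rank + (fromRows B D).rank := by gcongr
    _ ≤ Fintype.card (m ⊕ o) := rank_add_rank_le_card_of_mul_eq_zero hmul
    _ = Fintype.card m + Fintype.card o := Fintype.card_sum

/-- The incidence matrix of the transversal design with blocks `f b`, with entries in `R`. -/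
def incidenceMatrix (R : Type*) [Zero R] [One R] (f : β → ι → α) : Matrix β (ι × α) R :=
  Matrix.of fun b p => if f b p.1 = p.2 then 1 else 0

theorem incidenceMatrix_mulVec [Fintype ι] [Fintype α] {R : Type*} [NonAssocSemiring R]
    (f : β → ι → α) (c : ι × α → R) (b : β) :
    (incidenceMatrix R f *ᵥ c) b = ∑ i, c (i, f b i) := by
  simp [incidenceMatrix, Matrix.mulVec, dotProduct, Fintype.sum_prod_type]

theorem IsOrthogonalArray.two_mul_rank_incidenceMatrix_le [Fintype β] [Fintype ι] [Fintype α]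
    [Nontrivial ι] {K : Type*} [Field K] (hf : IsOrthogonalArray f)
    (hK : (Fintype.card α : K) = 0) :
    2 * (incidenceMatrix K f).rank ≤ Fintype.card β + Fintype.card ι := by
  have gram_eq : (incidenceMatrix K f)ᵀ * incidenceMatrix K f =
      (Matrix.of fun p i => if p.1 = i then 0 else 1 : Matrix (ι × α) ι K) *
        (Matrix.of fun i q => if i = q.1 then 1 else 0 : Matrix ι (ι × α) K) := by
    ext ⟨i, x⟩ ⟨j, y⟩
    simp only [incidenceMatrix, mul_apply, transpose_apply, of_apply, mul_ite, mul_one, mul_zero,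
      sum_ite_eq', mem_univ, if_true]
    split_ifs with hij
    · subst hij
      rw [hf.sum_apply i fun z => if z = y then if z = x then (1 : K) else 0 else 0, nsmul_eq_mul,
        hK, zero_mul]
    · rw [hf.sum_apply₂ hij fun z w => if w = y then if z = x then (1 : K) else 0 else 0]
      simp
  have := rank_add_rank_le_of_mul_eq_mul _ _ _ _ gram_eq
  rwa [rank_transpose, ← two_mul] at this

/-- The words `c` of the dual of the code spanned by the blocks: the entries of `c` sum to zero
along every block of the transversal design. -/
def IsDualWord {R : Type*} [AddCommMonoid R] [Fintype ι] (f : β → ι → α) (c : ι → α → R) : Prop :=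
  ∀ b, ∑ i, c i (f b i) = 0

namespace IsDualWord

variable [Fintype ι]

theorem add_const {R : Type*} [AddCommMonoid R] {c : ι → α → R} (hc : IsDualWord f c) {u : ι → R}
    (hu : ∑ i, u i = 0) : IsDualWord f fun i x => c i x + u i := fun b => by
  rw [sum_add_distrib, hc b, hu, add_zero]

theorem sum_eq_sum_sum {R : Type*} [CommRing R] [Fintype α] [Nontrivial ι]
    {c : ι → α → R} (hc : IsDualWord f c) (hf : IsOrthogonalArray f)
    (hα : (Fintype.card α : R) = 0) (i : ι) : ∑ x, c i x = ∑ j, ∑ x, c j x := by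
  obtain ⟨_⟩ := hf.nonempty_fintype_rows
  obtain _ | ⟨⟨x⟩⟩ := isEmpty_or_nonempty α
  · simp
  have h := hf.sum_rowSum_mul_rowSum c fun j y => if j = i then if y = x then 1 else 0 else 0
  have sum_point (j : ι) :
      ∑ y, (if j = i then if y = x then 1 else 0 else 0 : R) = if j = i then 1 else 0 := by
    split_ifs <;> simp
  simp only [hc _, hα, sum_point, zero_mul, sum_const_zero, zero_add] at h
  simp only [mul_ite, mul_one, mul_zero, sum_ite_eq', mem_univ, if_true] at h
  exact (sub_eq_zero.1 h.symm).symm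

theorem sum_eq_zero {R : Type*} [CommRing R] [Fintype α] [Nontrivial ι]
    {c : ι → α → R} (hc : IsDualWord f c) (hf : IsOrthogonalArray f)
    (hα : (Fintype.card α : R) = 0) (hι : (Fintype.card ι : R) = 0) (i : ι) : ∑ x, c i x = 0 := by
  have hsum := hc.sum_eq_sum_sum hf hα
  calc ∑ x, c i x = ∑ j, ∑ x, c j x := hsum i
    _ = ∑ _j : ι, ∑ x, c i x := sum_congr rfl fun j _ => (hsum j).trans (hsum i).symm
    _ = 0 := by rw [sum_const, nsmul_eq_mul, card_univ, hι, zero_mul]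

end IsDualWord

theorem IsOrthogonalArray.exists_isDualWord_ne_zero [Fintype β] [Fintype ι] [Fintype α]
    [Nontrivial ι] {K : Type*} [Field K] (hf : IsOrthogonalArray f)
    (hK : (Fintype.card α : K) = 0) (s : Finset (ι × α))
    (hs : Fintype.card β + Fintype.card ι + 2 * #s < 2 * (Fintype.card ι * Fintype.card α)) :
    ∃ c : ι → α → K, c ≠ 0 ∧ IsDualWord f c ∧ ∀ p ∈ s, c p.1 p.2 = 0 := by
  let φ := (incidenceMatrix K f).mulVecLin.rangeRestrict.prod
    (LinearMap.funLeft K K ((↑) : s → ι × α))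
  have hrank : 2 * Module.finrank K (LinearMap.range (incidenceMatrix K f).mulVecLin) ≤
      Fintype.card β + Fintype.card ι := hf.two_mul_rank_incidenceMatrix_le hK
  have hφ : LinearMap.ker φ ≠ ⊥ := LinearMap.ker_ne_bot_of_finrank_lt <| by
    simp only [Module.finrank_prod, Module.finrank_fintype_fun_eq_card, Fintype.card_coe,
      Fintype.card_prod]
    omega
  obtain ⟨c, hc, hc0⟩ := (Submodule.ne_bot_iff _).1 hφ
  obtain ⟨hrow, hvanish⟩ := Prod.ext_iff.1 (LinearMap.mem_ker.1 hc)
  refine ⟨Function.curry c, fun h => hc0 (Function.curry_injective h), fun b => ?_,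
    fun p hp => congrFun hvanish ⟨p, hp⟩⟩
  exact (incidenceMatrix_mulVec f c b).symm.trans (congrFun (congrArg Subtype.val hrow) b)

/-- The number of points of the block `f b` in the point set with fibre `P i` in the group `i`. -/
def meetCard [Fintype ι] (f : β → ι → α) (P : ι → Finset α) (b : β) : ℕ :=
  #{i | f b i ∈ P i}

namespace IsOrthogonalArray

variable [Fintype β] [Fintype ι] [Fintype α] [Nontrivial ι]

theorem sum_meetCard (hf : IsOrthogonalArray f) (P : ι → Finset α) :
    ∑ b, (meetCard f P b : ℤ) = Fintype.card α * ∑ i, (#(P i) : ℤ) := by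
  simpa [meetCard] using hf.sum_rowSum fun i x => if x ∈ P i then (1 : ℤ) else 0

theorem sum_meetCard_sq (hf : IsOrthogonalArray f) (P : ι → Finset α) :
    ∑ b, (meetCard f P b : ℤ) ^ 2 = Fintype.card α * ∑ i, (#(P i) : ℤ) +
      ((∑ i, (#(P i) : ℤ)) ^ 2 - ∑ i, (#(P i) : ℤ) ^ 2) := by
  simpa [meetCard, ← sq] using hf.sum_rowSum_mul_rowSum (fun i x => if x ∈ P i then (1 : ℤ) else 0)
    fun i x => if x ∈ P i then 1 else 0

end IsOrthogonalArray

theorem natCast_card_ne_zero_eq_sum {γ : Type*} [Fintype γ] (v : γ → ZMod 2) :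
    (#{x | v x ≠ 0} : ZMod 2) = ∑ x, v x := by
  have boole_ne_zero : ∀ z : ZMod 2, (if z ≠ 0 then 1 else 0) = z := by decide
  rw [Finset.natCast_card_filter]
  exact sum_congr rfl fun x _ => boole_ne_zero (v x)

theorem IsDualWord.even_meetCard [Fintype ι] [Fintype α] {c : ι → α → ZMod 2}
    (hc : IsDualWord f c) (b : β) : Even (meetCard f (fun i => {x | c i x ≠ 0}) b) := by
  have hcard := (natCast_card_ne_zero_eq_sum fun i => c i (f b i)).trans (hc b)
  simpa [meetCard, ← ZMod.natCast_eq_zero_iff_even] using hcard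

theorem IsOrthogonalArray.even_card_of_isDualWord [Fintype ι] [Fintype α] [Nontrivial ι]
    (hf : IsOrthogonalArray f) (hα : Even (Fintype.card α)) (hι : Even (Fintype.card ι))
    {c : ι → α → ZMod 2} (hc : IsDualWord f c) (i : ι) : Even #{x | c i x ≠ 0} := by
  rw [← ZMod.natCast_eq_zero_iff_even] at *
  rw [natCast_card_ne_zero_eq_sum, hc.sum_eq_zero hf hα hι]

theorem card_add_ne_zero [Fintype α] (v : α → ZMod 2) (u : ZMod 2) :
    #{x | v x + u ≠ 0} = if u = 0 then #{x | v x ≠ 0} else Fintype.card α - #{x | v x ≠ 0} := by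
  split_ifs with hu
  · simp only [hu, add_zero]
  · have add_ne_zero_iff : ∀ z w : ZMod 2, w ≠ 0 → (z + w ≠ 0 ↔ ¬ z ≠ 0) := by decide
    rw [← card_compl, compl_filter]
    simp only [add_ne_zero_iff _ u hu]

/-- A set of points of the transversal design with two points in each group, given by its fibres
`P i`, that every block misses or meets in two points. -/
def IsHyperoval [Fintype ι] (f : β → ι → α) (P : ι → Finset α) : Prop :=
  (∀ i, #(P i) = 2) ∧ ∀ b, meetCard f P b = 0 ∨ meetCard f P b = 2

theorem eight_dvd_mul_sub_two {m : ℤ} (hm : Even m) : 8 ∣ m * (m - 2) := by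
  obtain ⟨k, rfl⟩ := hm
  obtain ⟨t, ht⟩ := Int.even_mul_pred_self k
  exact ⟨t, by linear_combination 4 * ht⟩

section Six

variable [Fintype α] {f : β → Fin 4 → α}

theorem IsOrthogonalArray.sum_meetCard_mul_sub_two [Fintype β] (hf : IsOrthogonalArray f)
    (hα : Fintype.card α = 6) (P : Fin 4 → Finset α) :
    ∑ b, (meetCard f P b : ℤ) * (meetCard f P b - 2) + ∑ i, ((#(P i) : ℤ) - 2) ^ 2 =
      (∑ i, (#(P i) : ℤ) - 2) * (∑ i, (#(P i) : ℤ) - 8) := by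
  have sum_eq : ∑ b, (meetCard f P b : ℤ) * (meetCard f P b - 2) =
      ∑ b, (meetCard f P b : ℤ) ^ 2 - 2 * ∑ b, (meetCard f P b : ℤ) := by
    rw [mul_sum, ← sum_sub_distrib]
    exact sum_congr rfl fun b _ => by ring
  rw [sum_eq, hf.sum_meetCard, hf.sum_meetCard_sq, hα]
  simp only [Fin.sum_univ_four]
  push_cast
  ring

theorem IsOrthogonalArray.isHyperoval (hf : IsOrthogonalArray f)
    (hα : Fintype.card α = 6) {P : Fin 4 → Finset α} (hP : ∀ b, Even (meetCard f P b))
    (hcard : ∑ i, #(P i) = 8) : IsHyperoval f P := by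
  obtain ⟨_⟩ := hf.nonempty_fintype_rows
  have meet_nonneg (b : β) : 0 ≤ (meetCard f P b : ℤ) * (meetCard f P b - 2) := by
    obtain ⟨k, hk⟩ := hP b
    obtain rfl | hk0 := Nat.eq_zero_or_pos k
    · simp [hk]
    · exact mul_nonneg (by positivity) (by omega)
  have hsum := hf.sum_meetCard_mul_sub_two hα P
  rw [← Nat.cast_sum univ, hcard, Nat.cast_ofNat, sub_self, mul_zero] at hsum
  obtain ⟨hmeet, hfib⟩ := (add_eq_zero_iff_of_nonneg (sum_nonneg fun b _ => meet_nonneg b)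
    (sum_nonneg fun i _ => sq_nonneg _)).1 hsum
  refine ⟨fun i => ?_, fun b => ?_⟩
  · have := (sum_eq_zero_iff_of_nonneg fun i _ => sq_nonneg _).1 hfib i (mem_univ i)
    have := pow_eq_zero_iff two_ne_zero |>.1 this
    omega
  · have := (sum_eq_zero_iff_of_nonneg fun b _ => meet_nonneg b).1 hmeet b (mem_univ b)
    have := mul_eq_zero.1 this
    omega

theorem IsOrthogonalArray.even_sum_half_card (hf : IsOrthogonalArray f)
    (hα : Fintype.card α = 6) {P : Fin 4 → Finset α} (hP : ∀ b, Even (meetCard f P b))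
    {a : Fin 4 → ℕ} (ha : ∀ i, #(P i) = 2 * a i) : Even (∑ i, a i) := by
  obtain ⟨_⟩ := hf.nonempty_fintype_rows
  obtain ⟨k, hk⟩ : (8 : ℤ) ∣ ∑ b, (meetCard f P b : ℤ) * (meetCard f P b - 2) :=
    dvd_sum fun b _ => eight_dvd_mul_sub_two ((hP b).natCast)
  have hsum := hf.sum_meetCard_mul_sub_two hα P
  obtain ⟨t, ht⟩ := Int.even_mul_pred_self (∑ i, (a i : ℤ))
  obtain ⟨u, hu⟩ : Even (∑ i, (a i : ℤ) * (a i - 1)) :=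
    even_sum _ fun i _ => Int.even_mul_pred_self _
  simp only [ha, hk, Fin.sum_univ_four] at hsum ht hu
  have key : (a 0 + a 1 + a 2 + a 3 : ℤ) = 2 * (t - u - k - (a 0 + a 1 + a 2 + a 3)) := by
    push_cast at hsum
    linarith
  rw [Fin.sum_univ_four, Nat.even_iff]
  omega

theorem IsOrthogonalArray.exists_isDualWord_ne (hf : IsOrthogonalArray f)
    (hα : Fintype.card α = 6) :
    ∃ c : Fin 4 → α → ZMod 2, IsDualWord f c ∧ ∃ i x y, c i x ≠ c i y := by
  obtain ⟨_⟩ := hf.nonempty_fintype_rows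
  obtain ⟨x₀⟩ : Nonempty α := Fintype.card_pos_iff.1 (by omega)
  obtain ⟨c, hc, hdual, hzero⟩ := hf.exists_isDualWord_ne_zero (K := ZMod 2)
    (by rw [hα]; decide) (({3}ᶜ : Finset (Fin 4)) ×ˢ {x₀}) (by simp [hf.card_rows, hα, card_compl])
  refine ⟨c, hdual, ?_⟩
  by_contra! hconst
  have zero_of_ne {i : Fin 4} (hi : i ≠ 3) (x : α) : c i x = 0 :=
    (hconst i x x₀).trans (hzero (i, x₀) (by simp [hi]))
  refine hc (funext₂ fun i x => ?_)
  obtain rfl | hi := eq_or_ne i 3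
  · obtain ⟨b, -, rfl⟩ := hf.exists_row (show (0 : Fin 4) ≠ 3 by decide) x₀ x
    have hrow := hdual b
    rwa [Fin.sum_univ_four, zero_of_ne (by decide), zero_of_ne (by decide),
      zero_of_ne (by decide), zero_add, zero_add, zero_add] at hrow
  · exact zero_of_ne hi x

/-- Complementing a fibre replaces its half-size `a` by `3 - a`. -/
theorem exists_sum_half_card_eq_four : ∀ a : Fin 4 → Fin 4,
    (∃ i, (a i : ℕ) ≠ 0 ∧ (a i : ℕ) ≠ 3) → Even (∑ i, (a i : ℕ)) →
    ∃ u : Fin 4 → ZMod 2, ∑ i, u i = 0 ∧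
      ∑ i, (if u i = 0 then (a i : ℕ) else 3 - a i) = 4 := by
  simp only [Nat.even_iff]
  decide +kernel

theorem surjective_of_ne {γ : Type*} {v : γ → ZMod 2} {x y : γ} (hxy : v x ≠ v y) :
    Function.Surjective v := by
  have eq_or_eq : ∀ p q z : ZMod 2, p ≠ q → p = z ∨ q = z := by decide
  exact fun z => (eq_or_eq _ _ z hxy).elim (⟨x, ·⟩) (⟨y, ·⟩)

theorem IsOrthogonalArray.exists_isHyperoval (hf : IsOrthogonalArray f)
    (hα : Fintype.card α = 6) : ∃ P, IsHyperoval f P := by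
  obtain ⟨c, hc, i₀, x, y, hxy⟩ := hf.exists_isDualWord_ne hα
  have hfib (i : Fin 4) : Even #{x | c i x ≠ 0} :=
    hf.even_card_of_isDualWord (by rw [hα]; decide) (by decide) hc i
  obtain ⟨z, hz⟩ := surjective_of_ne hxy 0
  obtain ⟨w, hw⟩ := surjective_of_ne hxy 1
  have hpos : 0 < #{x | c i₀ x ≠ 0} := card_pos.2 ⟨w, by simp [hw]⟩
  have hlt : #{x | c i₀ x ≠ 0} < 6 := hα ▸ card_lt_univ_of_notMem (x := z) (by simp [hz])
  choose a ha using fun i => (hfib i).two_dvd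
  have ha_lt (i : Fin 4) : a i < 4 := by
    have hle : #{x | c i x ≠ 0} ≤ 6 := hα ▸ card_le_univ _
    have := ha i
    omega
  have hi₀ : a i₀ ≠ 0 ∧ a i₀ ≠ 3 := by
    have := ha i₀
    omega
  obtain ⟨u, hu, hsum⟩ := exists_sum_half_card_eq_four (fun i => ⟨a i, ha_lt i⟩) ⟨i₀, hi₀⟩
    (hf.even_sum_half_card hα hc.even_meetCard ha)
  refine ⟨_, hf.isHyperoval hα (hc.add_const hu).even_meetCard ?_⟩
  calc ∑ i, #{x | c i x + u i ≠ 0}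
      = ∑ i, 2 * (if u i = 0 then a i else 3 - a i) := sum_congr rfl fun i _ => by
        rw [card_add_ne_zero, hα, ha i]
        split_ifs <;> omega
    _ = 8 := by rw [← mul_sum, hsum]; norm_num

end Six

namespace IsHyperoval

theorem eq_or_eq_of_mem_fibre [Fintype ι] {P : ι → Finset α} (hP : IsHyperoval f P) {i : ι}
    {x y z : α} (hx : x ∈ P i) (hy : y ∈ P i) (hz : z ∈ P i) (hxy : x ≠ y) : z = x ∨ z = y := by
  have hPi : {x, y} = P i := eq_of_subset_of_card_le (by simp [insert_subset_iff, hx, hy]) <| by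
    rw [hP.1 i, card_pair hxy]
  simpa [← hPi] using hz

theorem exists_ne_mem [Fintype ι] {P : ι → Finset α} (hP : IsHyperoval f P) {b : β} {i : ι}
    (hi : f b i ∈ P i) : ∃ j ≠ i, f b j ∈ P j := by
  have hpos : 0 < meetCard f P b := card_pos.2 ⟨i, by simpa using hi⟩
  obtain ⟨j, hj, hji⟩ := exists_mem_ne (s := ({i | f b i ∈ P i} : Finset ι))
    (by have := hP.2 b; unfold meetCard at *; omega) i
  exact ⟨j, hji, by simpa using hj⟩

theorem notMem_of_mem_of_mem [Fintype ι] {P : ι → Finset α} (hP : IsHyperoval f P) {b : β}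
    {i j k : ι} (hij : i ≠ j) (hik : i ≠ k) (hjk : j ≠ k) (hi : f b i ∈ P i) (hj : f b j ∈ P j) :
    f b k ∉ P k := fun hk => by
  have hle : #{i, j, k} ≤ meetCard f P b := card_le_card <| by
    simp [insert_subset_iff, hi, hj, hk]
  have := hP.2 b
  rw [card_eq_three.2 ⟨i, j, k, hij, hik, hjk, rfl⟩] at hle
  omega

end IsHyperoval

section Hyperoval

variable {f : β → Fin 4 → α} {P : Fin 4 → Finset α}

theorem exists_nodup_of_ne {i j : Fin 4} (hij : i ≠ j) : ∃ k l, [i, j, k, l].Nodup := by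
  decide +revert

theorem sum_of_nodup {M : Type*} [AddCommMonoid M] {i j k l : Fin 4} (h : [i, j, k, l].Nodup)
    (g : Fin 4 → M) : ∑ m, g m = g i + g j + g k + g l := by
  have huniv : [i, j, k, l].toFinset = univ :=
    eq_univ_of_card _ (List.toFinset_card_of_nodup h)
  rw [← huniv, List.sum_toFinset g h]
  simp [add_assoc]

theorem eq_of_nodup {i j k l m : Fin 4} (h : [i, j, k, l].Nodup) :
    m = i ∨ m = j ∨ m = k ∨ m = l := by
  decide +revert

theorem IsHyperoval.exists_secant (hP : IsHyperoval f P) (hf : IsOrthogonalArray f)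
    {i j k l : Fin 4} (h : [i, j, k, l].Nodup) {x : α} (hx : x ∉ P i) :
    ∃ b, f b i = x ∧ f b j ∈ P j ∧ f b k ∈ P k := by
  have hij : i ≠ j := by grind
  have hik : i ≠ k := by grind
  have hil : i ≠ l := by grind
  by_contra! hno
  have mem_l {b : β} (hb : f b i = x) (hj : f b j ∈ P j) : f b l ∈ P l := by
    obtain ⟨m, hmj, hm⟩ := hP.exists_ne_mem hj
    obtain rfl | rfl | rfl | rfl := eq_of_nodup (m := m) h
    · exact absurd (hb ▸ hm) hx
    · exact absurd rfl hmj
    · exact absurd hm (hno b hb hj)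
    · exact hm
  obtain ⟨s, s', hss', hPj⟩ := card_eq_two.1 (hP.1 j)
  obtain ⟨t, ht⟩ := card_pos.1 (by simp [hP.1 k] : 0 < #(P k))
  obtain ⟨b, hbx, rfl⟩ := hf.exists_row hij x s
  obtain ⟨b', hbx', rfl⟩ := hf.exists_row hij x s'
  obtain ⟨e, hex, rfl⟩ := hf.exists_row hik x t
  have hbj : f b j ∈ P j := by simp [hPj]
  have hbj' : f b' j ∈ P j := by simp [hPj]
  have hne : f b l ≠ f b' l := fun hl =>
    hss' (congrArg (f · j) (hf.row_ext hil (hbx.trans hbx'.symm) hl))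
  obtain ⟨m, hmk, hm⟩ := hP.exists_ne_mem ht
  obtain rfl | rfl | rfl | rfl := eq_of_nodup (m := m) h
  · exact hx (hex ▸ hm)
  · exact hno e hex hm ht
  · exact hmk rfl
  · obtain hl | hl := hP.eq_or_eq_of_mem_fibre (mem_l hbx hbj) (mem_l hbx' hbj') hm hne
    · obtain rfl := hf.row_ext hil (hex.trans hbx.symm) hl
      exact hno e hex hbj ht
    · obtain rfl := hf.row_ext hil (hex.trans hbx'.symm) hl
      exact hno e hex hbj' ht

theorem IsHyperoval.ne_of_secants (hP : IsHyperoval f P) (hf : IsOrthogonalArray f)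
    {i j k l : Fin 4} (h : [i, j, k, l].Nodup) {b b' : β} (hi : f b i = f b' i)
    (hj : f b j ∈ P j) (hk : f b k ∈ P k) (hl : f b' l ∈ P l) : f b j ≠ f b' j := fun hjj => by
  obtain rfl := hf.row_ext (show i ≠ j by grind) hi hjj
  exact hP.notMem_of_mem_of_mem (by grind) (by grind) (by grind) hj hk hl

theorem IsHyperoval.secant_ext (hP : IsHyperoval f P) (hf : IsOrthogonalArray f)
    {i j k l : Fin 4} (h : [i, j, k, l].Nodup) {b b' : β} (hi : f b i = f b' i)
    (hj : f b j ∈ P j) (hk : f b k ∈ P k) (hj' : f b' j ∈ P j) (hk' : f b' k ∈ P k) : b = b' := by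
  have hext : f b i ∉ P i := hP.notMem_of_mem_of_mem (by grind) (by grind) (by grind) hj hk
  obtain ⟨e, he, hej, hel⟩ := hP.exists_secant hf (j := j) (k := l) (l := k) (by grind) hext
  have hne : f b j ≠ f e j := hP.ne_of_secants hf h he.symm hj hk hel
  have hne' : f b' j ≠ f e j := hP.ne_of_secants hf h (hi.symm.trans he.symm) hj' hk' hel
  exact hf.row_ext (show i ≠ j by grind) hi
    ((hP.eq_or_eq_of_mem_fibre hj hej hj' hne).resolve_right hne').symm

/-- If the points of `a` and `e` in the group `i` coincided, the secant through that point meeting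
the groups `k` and `l` would be the one through the common point of `b` and `b'`. -/
theorem IsHyperoval.ne_of_mates (hP : IsHyperoval f P) (hf : IsOrthogonalArray f)
    {i j k l : Fin 4} (h : [i, j, k, l].Nodup) {b b' a e : β} (hi : f b i = f b' i)
    (hbj : f b j ∈ P j) (hbk : f b k ∈ P k) (hbj' : f b' j ∈ P j) (hbl' : f b' l ∈ P l)
    (haj : f a j ∈ P j) (hak : f a k = f b k) (hej : f e j ∈ P j) (hel : f e l = f b' l)
    (hab : a ≠ b) : f a i ≠ f e i := fun hae => by
  have hak' : f a k ∈ P k := hak ▸ hbk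
  have hel' : f e l ∈ P l := hel ▸ hbl'
  have hikjl : [i, k, j, l].Nodup := by grind
  have hiljk : [i, l, j, k].Nodup := by grind
  have hbi : f b i ∉ P i := hP.notMem_of_mem_of_mem (by grind) (by grind) (by grind) hbj hbk
  have hai : f a i ∉ P i := hP.notMem_of_mem_of_mem (by grind) (by grind) (by grind) haj hak'
  obtain ⟨r, hri, hrk, hrl⟩ := hP.exists_secant hf (j := k) (k := l) (l := j) (by grind) hbi
  obtain ⟨s, hsi, hsk, hsl⟩ := hP.exists_secant hf (j := k) (k := l) (l := j) (by grind) hai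
  have hkr : f b k ≠ f r k := hP.ne_of_secants hf hikjl hri.symm hbk hbj hrl
  have hks : f b k ≠ f s k := hak ▸ hP.ne_of_secants hf hikjl hsi.symm hak' haj hsl
  have hlr : f b' l ≠ f r l := hP.ne_of_secants hf hiljk (hi.symm.trans hri.symm) hbl' hbj' hrk
  have hls : f b' l ≠ f s l :=
    hel ▸ hP.ne_of_secants hf hiljk (hae.symm.trans hsi.symm) hel' hej hsk
  obtain rfl : r = s := hf.row_ext (show k ≠ l by grind)
    (((hP.eq_or_eq_of_mem_fibre hbk hrk hsk hkr).resolve_left hks.symm).symm)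
    (((hP.eq_or_eq_of_mem_fibre hbl' hrl hsl hlr).resolve_left hls.symm).symm)
  exact hab (hf.row_ext (show i ≠ k by grind) (hsi.symm.trans hri) hak)

/-- Two points `x`, `y` of the group `i` are mates if distinct blocks through them share a point of
the set `P` and have their second point in `P` in the same group. A weighting as in
`IsExternalWord` takes opposite values at mates. -/
def Mates (f : β → Fin 4 → α) (P : Fin 4 → Finset α) (i : Fin 4) (x y : α) : Prop :=
  ∃ j k l b b', [i, j, k, l].Nodup ∧ b ≠ b' ∧ f b i = x ∧ f b' i = y ∧
    f b j ∈ P j ∧ f b' j = f b j ∧ f b k ∈ P k ∧ f b' k ∈ P k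

theorem Mates.ne (hf : IsOrthogonalArray f) {i : Fin 4} {x y : α} (hxy : Mates f P i x y) :
    x ≠ y := by
  obtain ⟨j, k, l, b, b', h, hne, rfl, rfl, -, hj, -⟩ := hxy
  exact fun hi => hne (hf.row_ext (show i ≠ j by grind) hi hj.symm)

theorem Mates.notMem (hP : IsHyperoval f P) {i : Fin 4} {x y : α} (hxy : Mates f P i x y) :
    y ∉ P i := by
  obtain ⟨j, k, l, b, b', h, -, -, rfl, hj, hjj, -, hk⟩ := hxy
  exact hP.notMem_of_mem_of_mem (by grind) (by grind) (by grind) (hjj ▸ hj) hk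

theorem IsHyperoval.exists_three_mates (hP : IsHyperoval f P) (hf : IsOrthogonalArray f)
    {i : Fin 4} {x : α} (hx : x ∉ P i) : ∃ s : Finset α, #s = 3 ∧ ∀ y ∈ s, Mates f P i x y := by
  obtain ⟨j, hji⟩ := exists_ne i
  obtain ⟨k, l, h⟩ := exists_nodup_of_ne hji.symm
  obtain ⟨b, hb, hbj, hbk⟩ := hP.exists_secant hf h hx
  obtain ⟨b', hb', hbj', hbl'⟩ := hP.exists_secant hf (j := j) (k := l) (l := k) (by grind) hx
  have hbb : f b i = f b' i := hb.trans hb'.symm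
  have hjj : f b j ≠ f b' j := hP.ne_of_secants hf h hbb hbj hbk hbl'
  obtain ⟨t, ht, htk⟩ := exists_mem_ne (s := P k) (by simp [hP.1 k]) (f b k)
  obtain ⟨a, haj, hak⟩ := hf.exists_row (show j ≠ k by grind) (f b j) t
  obtain ⟨a', haj', hak'⟩ := hf.exists_row (show j ≠ k by grind) (f b' j) (f b k)
  obtain ⟨e, hej, hel⟩ := hf.exists_row (show j ≠ l by grind) (f b j) (f b' l)
  replace ht : f a k ∈ P k := hak ▸ ht
  have haj_mem : f a j ∈ P j := haj ▸ hbj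
  have haj_mem' : f a' j ∈ P j := haj' ▸ hbj'
  have hej_mem : f e j ∈ P j := hej ▸ hbj
  have hba : b ≠ a := by rintro rfl; exact htk hak.symm
  have hba' : b ≠ a' := by rintro rfl; exact hjj haj'
  have hbe : b' ≠ e := by rintro rfl; exact hjj hej.symm
  have haa : f a i ≠ f a' i := fun hi => by
    obtain rfl := hP.secant_ext hf h hi haj_mem ht haj_mem' (hak' ▸ hbk)
    exact hjj (haj.symm.trans haj')
  have hae : f a i ≠ f e i := fun hi =>
    hP.ne_of_secants hf h hi haj_mem ht (hel ▸ hbl') (haj.trans hej.symm)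
  have hae' : f a' i ≠ f e i :=
    hP.ne_of_mates hf h hbb hbj hbk hbj' hbl' haj_mem' hak' hej_mem hel hba'.symm
  refine ⟨{f a i, f a' i, f e i}, card_eq_three.2 ⟨_, _, _, haa, hae, hae', rfl⟩, ?_⟩
  simp only [mem_insert, mem_singleton, forall_eq_or_imp, forall_eq]
  exact ⟨⟨j, k, l, b, a, h, hba, hb, rfl, hbj, haj, hbk, ht⟩,
    ⟨k, j, l, b, a', by grind, hba', hb, rfl, hbk, hak', hbj, haj_mem'⟩,
    ⟨l, j, k, b', e, by grind, hbe, hb', rfl, hbl', hel, hbj', hej_mem⟩⟩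

theorem IsHyperoval.exists_nodup_of_meetCard_ne_zero (hP : IsHyperoval f P) {b : β}
    (hb : meetCard f P b ≠ 0) :
    ∃ j k i l, [j, k, i, l].Nodup ∧ f b j ∈ P j ∧ f b k ∈ P k := by
  obtain ⟨j, hj⟩ := card_pos.1 (Nat.pos_of_ne_zero hb)
  replace hj : f b j ∈ P j := by simpa using hj
  obtain ⟨k, hkj, hk⟩ := hP.exists_ne_mem hj
  obtain ⟨i, l, h⟩ := exists_nodup_of_ne hkj.symm
  exact ⟨j, k, i, l, h, hj, hk⟩

/-- A weighting of the points that vanishes on the hyperoval `P` and sums to zero along every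
group and every block missing `P`. -/
structure IsExternalWord [Fintype α] (f : β → Fin 4 → α) (P : Fin 4 → Finset α)
    (c : Fin 4 → α → ℚ) : Prop where
  eq_zero_of_mem : ∀ i, ∀ x ∈ P i, c i x = 0
  sum_block : ∀ b, meetCard f P b = 0 → ∑ i, c i (f b i) = 0
  sum_group : ∀ i, ∑ x, c i x = 0

variable [Fintype α]

theorem IsHyperoval.sum_meetCard_mul_rowSum [Fintype β] (hP : IsHyperoval f P)
    (hf : IsOrthogonalArray f) {g : Fin 4 → α → ℚ} (hg : ∀ i, ∀ x ∈ P i, g i x = 0) :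
    ∑ b, (meetCard f P b : ℚ) * ∑ i, g i (f b i) = 6 * ∑ i, ∑ x, g i x := by
  have hsum := hf.sum_rowSum_mul_rowSum (fun i x => if x ∈ P i then (1 : ℚ) else 0) g
  have hfib (i : Fin 4) : ∑ x, (if x ∈ P i then (1 : ℚ) else 0) = 2 := by simp [hP.1 i]
  have hzero (i : Fin 4) (x : α) : (if x ∈ P i then (1 : ℚ) else 0) * g i x = 0 := by
    split_ifs with hx
    · rw [hg i x hx, mul_zero]
    · exact zero_mul _
  simp only [hfib, hzero, ← mul_sum, sum_const_zero, mul_zero, zero_add] at hsum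
  simp only [meetCard, natCast_card_filter, hsum, sum_const, card_univ, Fintype.card_fin]
  ring

theorem IsHyperoval.card_external [Fintype β] (hP : IsHyperoval f P) (hf : IsOrthogonalArray f)
    (hα : Fintype.card α = 6) : Fintype.card {b // meetCard f P b = 0} = 12 := by
  have hsum := hf.sum_meetCard P
  have hmeet (b : β) : (meetCard f P b : ℤ) = 2 - 2 * if meetCard f P b = 0 then 1 else 0 := by
    obtain h | h := hP.2 b <;> simp [h]
  simp only [hmeet, hP.1, hα, sum_sub_distrib, ← mul_sum, sum_boole, sum_const, card_univ,
    hf.card_rows, Fintype.card_fin] at hsum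
  rw [Fintype.card_subtype]
  norm_num at hsum
  omega

theorem IsHyperoval.exists_isExternalWord (hP : IsHyperoval f P) (hf : IsOrthogonalArray f)
    (hα : Fintype.card α = 6) : ∃ c, c ≠ 0 ∧ IsExternalWord f P c := by
  obtain ⟨_⟩ := hf.nonempty_fintype_rows
  let rowSum (b : β) : (Fin 4 → α → ℚ) →ₗ[ℚ] ℚ :=
    ∑ i, LinearMap.proj (f b i) ∘ₗ LinearMap.proj i
  let groupSum (i : Fin 4) : (Fin 4 → α → ℚ) →ₗ[ℚ] ℚ := ∑ x, LinearMap.proj x ∘ₗ LinearMap.proj i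
  let φ := (LinearMap.pi fun b : {b // meetCard f P b = 0} => rowSum b).prod <|
    (LinearMap.pi fun p : Σ i, P i => LinearMap.proj (p.2 : α) ∘ₗ LinearMap.proj p.1).prod <|
    LinearMap.pi fun i : Fin 3 => groupSum i.castSucc
  have hφ : LinearMap.ker φ ≠ ⊥ := LinearMap.ker_ne_bot_of_finrank_lt <| by
    simp [Module.finrank_prod, Module.finrank_pi_fintype, hP.card_external hf hα, hP.1, hα]
  obtain ⟨c, hc, hc0⟩ := (Submodule.ne_bot_iff _).1 hφ
  obtain ⟨hblock, hrest⟩ := Prod.ext_iff.1 (LinearMap.mem_ker.1 hc)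
  obtain ⟨hvanish, hgroup⟩ := Prod.ext_iff.1 hrest
  have eq_zero_of_mem (i x) (hx : x ∈ P i) : c i x = 0 := congrFun hvanish ⟨i, x, hx⟩
  have sum_block (b) (hb : meetCard f P b = 0) : ∑ i, c i (f b i) = 0 := by
    simpa [φ, rowSum] using congrFun hblock ⟨b, hb⟩
  have sum_castSucc (i : Fin 3) : ∑ x, c i.castSucc x = 0 := by
    simpa [φ, groupSum] using congrFun hgroup i
  have hmeet : ∑ b, (meetCard f P b : ℚ) * ∑ i, c i (f b i) = 2 * ∑ b, ∑ i, c i (f b i) := by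
    rw [mul_sum]
    refine sum_congr rfl fun b _ => ?_
    obtain hb | hb := hP.2 b
    · rw [sum_block b hb, mul_zero, mul_zero]
    · rw [hb, Nat.cast_ofNat]
  rw [hP.sum_meetCard_mul_rowSum hf eq_zero_of_mem, hf.sum_rowSum, hα,
    Fin.sum_univ_castSucc] at hmeet
  simp only [sum_castSucc, sum_const_zero, zero_add] at hmeet
  refine ⟨c, hc0, eq_zero_of_mem, sum_block, fun i => ?_⟩
  induction i using Fin.lastCases with
  | last =>
    change 6 * ∑ x, c (Fin.last 3) x = 2 * (6 * ∑ x, c (Fin.last 3) x) at hmeet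
    linarith
  | cast i => exact sum_castSucc i

namespace IsExternalWord

variable {c : Fin 4 → α → ℚ}

/-- Every block `b` meeting the hyperoval contributes `(c i (f b i) - c l (f b l)) ^ 2`, with `i`
and `l` its two external groups, to a sum that the array identities evaluate to zero. -/
theorem eq_on_secant (hc : IsExternalWord f P c) (hP : IsHyperoval f P)
    (hf : IsOrthogonalArray f) (hα : Fintype.card α = 6) {b : β} {j k i l : Fin 4}
    (h : [j, k, i, l].Nodup) (hj : f b j ∈ P j) (hk : f b k ∈ P k) :
    c i (f b i) = c l (f b l) := by
  obtain ⟨_⟩ := hf.nonempty_fintype_rows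
  let excess (b : β) : ℚ := meetCard f P b * ∑ i, c i (f b i) ^ 2 - (∑ i, c i (f b i)) ^ 2
  have excess_secant {b : β} {j k i l : Fin 4} (h : [j, k, i, l].Nodup) (hj : f b j ∈ P j)
      (hk : f b k ∈ P k) : excess b = (c i (f b i) - c l (f b l)) ^ 2 := by
    have hb : meetCard f P b = 2 := (hP.2 b).resolve_left <|
      (card_pos.2 ⟨j, by simpa using hj⟩).ne'
    simp only [excess, sum_of_nodup h, hb, hc.eq_zero_of_mem _ _ hj, hc.eq_zero_of_mem _ _ hk]
    push_cast
    ring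
  have excess_nonneg (b : β) : 0 ≤ excess b := by
    by_cases hb : meetCard f P b = 0
    · simp [excess, hb, hc.sum_block b hb]
    · obtain ⟨j, k, i, l, h, hj, hk⟩ := hP.exists_nodup_of_meetCard_ne_zero hb
      rw [excess_secant h hj hk]
      exact sq_nonneg _
  have sum_excess : ∑ b, excess b = 0 := by
    have hsq := hP.sum_meetCard_mul_rowSum hf (g := fun i x => c i x ^ 2) fun i x hx => by
      rw [hc.eq_zero_of_mem i x hx, zero_pow two_ne_zero]
    have hrow := hf.sum_rowSum_mul_rowSum c c
    simp only [hc.sum_group, sum_const_zero, mul_zero, sub_zero, add_zero, hα] at hrow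
    simp only [← sq] at hrow
    rw [sum_sub_distrib, hsq, hrow, Nat.cast_ofNat, sub_self]
  have := (sum_eq_zero_iff_of_nonneg fun b _ => excess_nonneg b).1 sum_excess b (mem_univ b)
  rw [excess_secant h hj hk] at this
  exact sub_eq_zero.1 (pow_eq_zero_iff two_ne_zero |>.1 this)

theorem sum_block_through [Fintype β] (hf : IsOrthogonalArray f) {i j : Fin 4} (hij : i ≠ j)
    (hc : IsExternalWord f P c) (s : α) : ∑ b with f b j = s, c i (f b i) = 0 := by
  rw [sum_filter, hf.sum_apply₂ hij fun x y => if y = s then c i x else 0]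
  simp [hc.sum_group]

/-- On the secants through a fixed `s ∈ P j`, let `S k i` be the sum of the values of `c` in the
group `i` over those secants that meet `P k`. Then `S k i = S k l` and `S k i + S l i = 0` for the
three groups `k`, `i`, `l` other than `j`, so all of these sums vanish. -/
theorem sum_secant [Fintype β] (hc : IsExternalWord f P c) (hP : IsHyperoval f P)
    (hf : IsOrthogonalArray f) (hα : Fintype.card α = 6) {j k i l : Fin 4}
    (h : [j, k, i, l].Nodup) {s : α} (hs : s ∈ P j) :
    ∑ b with f b j = s ∧ f b k ∈ P k, c i (f b i) = 0 := by
  let S (k i : Fin 4) : ℚ := ∑ b with f b j = s ∧ f b k ∈ P k, c i (f b i)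
  have S_comm {k i l : Fin 4} (h : [j, k, i, l].Nodup) : S k i = S k l :=
    sum_congr rfl fun b hb => by
      obtain ⟨-, rfl, hk⟩ := mem_filter.1 hb
      exact hc.eq_on_secant hP hf hα h hs hk
  have S_add {k i l : Fin 4} (h : [j, k, i, l].Nodup) : S k i + S l i = 0 := by
    rw [← hc.sum_block_through hf (i := i) (j := j) (by grind) s]
    simp only [S, ← filter_filter]
    rw [sum_filter, sum_filter (s := {e | f e j = s}), ← sum_add_distrib]
    refine sum_congr rfl fun b hb => ?_
    obtain ⟨-, rfl⟩ := mem_filter.1 hb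
    obtain ⟨m, hmj, hm⟩ := hP.exists_ne_mem hs
    obtain rfl | rfl | rfl | rfl := eq_of_nodup (m := m) h
    · exact absurd rfl hmj
    · have := hP.notMem_of_mem_of_mem (k := l) (by grind) (by grind) (by grind) hs hm
      simp [hm, this]
    · simp [hc.eq_zero_of_mem _ _ hm]
    · have := hP.notMem_of_mem_of_mem (k := k) (by grind) (by grind) (by grind) hs hm
      simp [hm, this]
  have h₁ := S_add h
  have h₂ := S_add (k := k) (i := l) (l := i) (by grind)
  have h₃ := S_add (k := i) (i := k) (l := l) (by grind)
  have h₄ := S_comm h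
  have h₅ := S_comm (k := i) (i := k) (l := l) (by grind)
  have h₆ := S_comm (k := l) (i := k) (l := i) (by grind)
  change S k i = 0
  linarith

theorem add_eq_zero_of_mates (hc : IsExternalWord f P c) (hP : IsHyperoval f P)
    (hf : IsOrthogonalArray f) (hα : Fintype.card α = 6) {i : Fin 4} {x y : α}
    (hxy : Mates f P i x y) : c i x + c i y = 0 := by
  obtain ⟨_⟩ := hf.nonempty_fintype_rows
  obtain ⟨j, k, l, b, b', h, hne, rfl, rfl, hj, hjj, hk, hk'⟩ := hxy
  have hjk : j ≠ k := by grind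
  have hkk : f b k ≠ f b' k := fun hkk => hne (hf.row_ext hjk hjj.symm hkk)
  have hpair : ({e | f e j = f b j ∧ f e k ∈ P k} : Finset β) = {b, b'} := by
    ext e
    simp only [mem_filter, mem_univ, true_and, mem_insert, mem_singleton]
    constructor
    · rintro ⟨hej, hek⟩
      exact (hP.eq_or_eq_of_mem_fibre hk hk' hek hkk).imp (hf.row_ext hjk hej)
        (hf.row_ext hjk (hej.trans hjj.symm))
    · rintro (rfl | rfl)
      exacts [⟨rfl, hk⟩, ⟨hjj, hk'⟩]
  have hsum := hc.sum_secant hP hf hα (j := j) (k := k) (i := i) (l := l) (by grind) hj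
  rwa [hpair, sum_pair hne] at hsum

theorem eq_zero (hc : IsExternalWord f P c) (hP : IsHyperoval f P) (hf : IsOrthogonalArray f)
    (hα : Fintype.card α = 6) : c = 0 := by
  ext i x
  by_cases hx : x ∈ P i
  · exact hc.eq_zero_of_mem i x hx
  obtain ⟨s, hs, hmates⟩ := hP.exists_three_mates hf hx
  have hneg (y : α) (hy : y ∈ s) : c i y = -c i x :=
    eq_neg_of_add_eq_zero_right (hc.add_eq_zero_of_mates hP hf hα (hmates y hy))
  have hdisj : Disjoint s (insert x (P i)) := disjoint_right.2 fun y hy hys => by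
    obtain rfl | hy := mem_insert.1 hy
    exacts [(hmates y hys).ne hf rfl, (hmates y hys).notMem hP hy]
  have huniv : s ∪ insert x (P i) = univ := eq_univ_of_card _ <| by
    rw [card_union_of_disjoint hdisj, hs, card_insert_of_notMem hx, hP.1 i, hα]
  have hsum := hc.sum_group i
  rw [← huniv, sum_union hdisj, sum_congr rfl hneg, sum_insert hx,
    sum_eq_zero (hc.eq_zero_of_mem i), sum_const, hs, nsmul_eq_mul] at hsum
  push_cast at hsum
  change c i x = 0
  linarith

end IsExternalWord

end Hyperoval

theorem not_isOrthogonalArray_six [Finite α] (hα : Nat.card α = 6) (f : β → Fin 4 → α) :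
    ¬ IsOrthogonalArray f := fun hf => by
  have := Fintype.ofFinite α
  rw [Nat.card_eq_fintype_card] at hα
  obtain ⟨P, hP⟩ := hf.exists_isHyperoval hα
  obtain ⟨c, hc0, hc⟩ := hP.exists_isExternalWord hf hα
  exact hc0 (hc.eq_zero hP hf hα)

end OrthogonalArray

section AME

open Finset

variable {n d : ℕ} {B : Finset (Fin n)} {ψ : (Fin n → Fin d) → ℂ}

theorem combine_of_mem (a : {i : Fin n // i ∉ B} → Fin d) (b : {i : Fin n // i ∈ B} → Fin d)
    {i : Fin n} (hi : i ∈ B) : combine B a b i = b ⟨i, hi⟩ :=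
  dif_pos hi

theorem combine_of_notMem (a : {i : Fin n // i ∉ B} → Fin d) (b : {i : Fin n // i ∈ B} → Fin d)
    {i : Fin n} (hi : i ∉ B) : combine B a b i = a ⟨i, hi⟩ :=
  dif_neg hi

theorem combine_eq_const_iff {a : {i : Fin n // i ∉ B} → Fin d}
    {b : {i : Fin n // i ∈ B} → Fin d} {x : Fin d} :
    combine B a b = Function.const _ x ↔ a = Function.const _ x ∧ b = Function.const _ x := by
  refine ⟨fun h => ⟨funext fun i => ?_, funext fun i => ?_⟩, ?_⟩
  · rw [← combine_of_notMem a b i.2, h, Function.const_apply, Function.const_apply]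
  · rw [← combine_of_mem a b i.2, h, Function.const_apply, Function.const_apply]
  · rintro ⟨rfl, rfl⟩
    exact funext fun i => dite_eq_ite.trans (ite_self x)

theorem IsAME.exists_ne_zero_eqOn [NeZero d] (h : IsAME n d ψ) (hB : #B ≤ n / 2)
    (t : Fin n → Fin d) : ∃ s, ψ s ≠ 0 ∧ ∀ i ∈ B, s i = t i := by
  have hρ := h.2 B hB (fun i => t i) (fun i => t i)
  rw [if_pos rfl] at hρ
  have hne : ((d : ℂ) ^ #B)⁻¹ ≠ 0 := inv_ne_zero (pow_ne_zero _ (NeZero.ne _))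
  obtain ⟨a, -, ha⟩ := exists_ne_zero_of_sum_ne_zero (hρ ▸ hne)
  exact ⟨_, left_ne_zero_of_mul ha, fun i hi => combine_of_mem _ _ hi⟩

theorem IsAME.eq_of_eqOn [NeZero d] (h : IsAME n d ψ) (hm : HasMinimalSupport n d ψ)
    (hB : #B = n / 2) {s s' : Fin n → Fin d} (hs : ψ s ≠ 0) (hs' : ψ s' ≠ 0)
    (heq : ∀ i ∈ B, s i = s' i) : s = s' := by
  let restrict (s : {s // ψ s ≠ 0}) (i : B) : Fin d := s.1 i
  have hsurj : Function.Surjective restrict := fun b => by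
    obtain ⟨s, hs, hst⟩ :=
      h.exists_ne_zero_eqOn hB.le fun i => if hi : i ∈ B then b ⟨i, hi⟩ else 0
    exact ⟨⟨s, hs⟩, funext fun i => (hst i i.2).trans (dif_pos i.2)⟩
  have hcard : Nat.card {s // ψ s ≠ 0} = Nat.card (B → Fin d) := by
    rw [show Nat.card {s // ψ s ≠ 0} = d ^ (n / 2) from hm]
    simp [hB]
  have hinj := ((Nat.bijective_iff_surjective_and_card restrict).2 ⟨hsurj, hcard⟩).1
  exact congrArg Subtype.val <|
    hinj (a₁ := ⟨s, hs⟩) (a₂ := ⟨s', hs'⟩) (funext fun i => heq i i.2)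

theorem IsAME.exists_isOrthogonalArray {ι : Type*} [Fintype ι] [NeZero d] (h : IsAME n d ψ)
    (hm : HasMinimalSupport n d ψ) (hn : 2 ≤ n / 2) (e : ι ↪ Fin n)
    (hι : Fintype.card ι + (n / 2 - 2) ≤ n) : ∃ C : Finset (Fin n), IsOrthogonalArray
      fun (s : {s // ψ s ≠ 0 ∧ ∀ i ∈ C, s i = 0}) (i : ι) => s.1 (e i) := by
  obtain ⟨C, hC, hCcard⟩ : ∃ C ⊆ (univ.map e)ᶜ, #C = n / 2 - 2 :=
    exists_subset_card_eq <| by rw [card_compl, card_map, card_univ, Fintype.card_fin]; omega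
  have he (i : ι) : e i ∉ C := fun hi => by simpa using hC hi
  refine ⟨C, fun i j hij => ?_⟩
  have hB : #(insert (e i) (insert (e j) C)) = n / 2 := by
    rw [card_insert_of_notMem (by simp [he, hij]), card_insert_of_notMem (he j), hCcard]
    omega
  constructor
  · rintro ⟨s, hs, hs0⟩ ⟨s', hs', hs0'⟩ heq
    obtain ⟨hi, hj⟩ : s (e i) = s' (e i) ∧ s (e j) = s' (e j) := Prod.ext_iff.1 heq
    refine Subtype.ext <| h.eq_of_eqOn hm hB hs hs' fun k hk => ?_
    simp only [mem_insert] at hk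
    obtain rfl | rfl | hk := hk
    exacts [hi, hj, (hs0 k hk).trans (hs0' k hk).symm]
  · rintro ⟨x, y⟩
    obtain ⟨s, hs, hst⟩ := h.exists_ne_zero_eqOn hB.le
      (Function.update (Function.update 0 (e i) x) (e j) y)
    refine ⟨⟨s, hs, fun k hk => ?_⟩, Prod.ext ?_ ?_⟩
    · have hki : k ≠ e i := fun hki => he i (hki ▸ hk)
      have hkj : k ≠ e j := fun hkj => he j (hkj ▸ hk)
      simp [hst k (by simp [hk]), hki, hkj]
    · simp [hst (e i) (by simp), hij]
    · simp [hst (e j) (by simp)]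

end AME

section GHZ

open Finset

/-- The Greenberger–Horne–Zeilinger state: the uniform superposition of the `d` constant
configurations of `n` sites. -/
def ghz (n d : ℕ) (s : Fin n → Fin d) : ℂ :=
  if s ∈ Set.range (Function.const (Fin n)) then ((Real.sqrt d : ℝ) : ℂ)⁻¹ else 0

variable {n d : ℕ} {B : Finset (Fin n)}

theorem sum_norm_ghz_sq [NeZero n] [NeZero d] : ∑ s, ‖ghz n d s‖ ^ 2 = 1 := by
  rw [← Fintype.sum_of_injective _ (Function.const_injective (α := Fin n))
    fun _ : Fin d => (d : ℝ)⁻¹]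
  · simp [NeZero.ne]
  · intro s hs
    simp [ghz, hs]
  · intro x
    simp [ghz]

theorem ghz_combine_const (hB : B ≠ univ) (x : Fin d) (b : {i // i ∈ B} → Fin d) :
    ghz n d (combine B (Function.const _ x) b) =
      if b = Function.const _ x then ((Real.sqrt d : ℝ) : ℂ)⁻¹ else 0 := by
  obtain ⟨j, hj⟩ : ∃ j, j ∉ B := by simpa [eq_univ_iff_forall] using hB
  have : Nonempty {i // i ∉ B} := ⟨⟨j, hj⟩⟩
  simp [ghz, eq_comm (b := combine B _ _), combine_eq_const_iff]

theorem ghz_combine_eq_zero {a : {i // i ∉ B} → Fin d} (ha : a ∉ Set.range (Function.const _))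
    (b : {i // i ∈ B} → Fin d) : ghz n d (combine B a b) = 0 :=
  if_neg fun ⟨x, hx⟩ => ha ⟨x, (combine_eq_const_iff.1 hx.symm).1.symm⟩

theorem sum_ghz_combine_mul_conj (hB : B ≠ univ) (b b' : {i // i ∈ B} → Fin d) :
    ∑ a, ghz n d (combine B a b) * starRingEnd ℂ (ghz n d (combine B a b')) =
      #{x | b = Function.const _ x ∧ b' = Function.const _ x} * (d : ℂ)⁻¹ := by
  obtain ⟨j, hj⟩ : ∃ j, j ∉ B := by simpa [eq_univ_iff_forall] using hB
  have : Nonempty {i // i ∉ B} := ⟨⟨j, hj⟩⟩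
  have hsq : ((Real.sqrt d : ℝ) : ℂ)⁻¹ * ((Real.sqrt d : ℝ) : ℂ)⁻¹ = (d : ℂ)⁻¹ := by
    rw [← mul_inv, ← Complex.ofReal_mul, Real.mul_self_sqrt d.cast_nonneg, Complex.ofReal_natCast]
  rw [natCast_card_filter, sum_mul,
    ← Fintype.sum_of_injective _ (Function.const_injective (α := {i // i ∉ B}))]
  · intro a ha
    rw [ghz_combine_eq_zero ha, zero_mul]
  · intro x
    simp only [ghz_combine_const hB, ite_and]
    split_ifs <;> simp [hsq]

theorem isAME_ghz [NeZero d] (hn : n / 2 = 1) : IsAME n d (ghz n d) := by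
  have : NeZero n := ⟨by omega⟩
  refine ⟨sum_norm_ghz_sq, fun B hB b b' => ?_⟩
  have hBuniv : B ≠ univ := fun h => by
    rw [h, card_univ, Fintype.card_fin] at hB
    omega
  rw [sum_ghz_combine_mul_conj hBuniv]
  split_ifs with hbb
  · subst hbb
    simp only [and_self]
    obtain hB | hB := Nat.le_one_iff_eq_zero_or_eq_one.1 (hn ▸ hB)
    · obtain rfl := card_eq_zero.1 hB
      simp [filter_true_of_mem fun _ _ => Subsingleton.elim b _, NeZero.ne]
    · obtain ⟨i, rfl⟩ := card_eq_one.1 hB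
      have hb (x : Fin d) : b = Function.const _ x ↔ b ⟨i, mem_singleton_self i⟩ = x :=
        ⟨fun h => congrFun h _, fun h => funext fun ⟨k, hk⟩ => by
          obtain rfl := mem_singleton.1 hk
          exact h⟩
      simp [hb, filter_eq]
  · rw [filter_false_of_mem fun x _ h => hbb (h.1.trans h.2.symm), card_empty, Nat.cast_zero,
      zero_mul]

theorem hasMinimalSupport_ghz [NeZero d] (hn : n / 2 = 1) : HasMinimalSupport n d (ghz n d) := by
  have : Nonempty (Fin n) := ⟨⟨0, by omega⟩⟩
  have hsupp : {s | ghz n d s ≠ 0} = Set.range (Function.const (Fin n)) := by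
    ext s
    simp [ghz, NeZero.ne]
  rw [HasMinimalSupport, hsupp, hn, pow_one,
    Set.ncard_range_of_injective Function.const_injective, Nat.card_fin]

end GHZ

/-- `𝒩(6) = 3`: no minimally supported `AME(n,6)` state exists for `n ≥ 4`, while a
minimally supported `AME(3,6)` state exists. -/
theorem N_six_eq_three :
    (∀ n : ℕ, 4 ≤ n →
      ¬ ∃ ψ : (Fin n → Fin 6) → ℂ, IsAME n 6 ψ ∧ HasMinimalSupport n 6 ψ) ∧
    (∃ ψ : (Fin 3 → Fin 6) → ℂ, IsAME 3 6 ψ ∧ HasMinimalSupport 3 6 ψ) := by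
  refine ⟨fun n hn => ?_, ghz 3 6, isAME_ghz rfl, hasMinimalSupport_ghz rfl⟩
  rintro ⟨ψ, hψ, hmin⟩
  obtain ⟨C, hC⟩ := hψ.exists_isOrthogonalArray hmin (by omega) (Fin.castLEEmb hn)
    (by rw [Fintype.card_fin]; omega)
  exact not_isOrthogonalArray_six (by simp) _ hC

end AMEPaper
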